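/- Let σ > 2 and δ ∈ (0,1). Let a, k, k' : ℤ → ℕ be finitely supported and not all zero, let (n_i*)_{i≥1} be the decreasing rearrangement of the finite multiset in which each |n| (n ∈ ℤ) is repeated 2a_n + k_n + k'_n times. Then Π_{n∈ℤ}(1 + a_n) · exp( −δ·( Σ_{n∈ℤ}(2a_n + k_n + k'_n)·ln^σ⌊n⌋ − 2·ln^σ⌊n₁*⌋ + ln^σ⌊m*(k,k')⌋ ) ) ≤ exp( 3·(4/δ)^{1/(σ−1)}·exp( (4/δ)^{1/σ} ) ). -/

import Mathlib

/-- `ln^σ⌊n⌋` for an integer `n`, where `⌊n⌋ = max{c, |n|}`. -/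
noncomputable def lnZ (c σ : ℝ) (n : ℤ) : ℝ := Real.log (max c |(n : ℝ)|) ^ σ

/-- `ln^σ⌊m⌋` for a natural number `m`, where `⌊m⌋ = max{c, m}`. -/
noncomputable def lnN (c σ : ℝ) (m : ℕ) : ℝ := Real.log (max c (m : ℝ)) ^ σ

/-- The finite multiset in which each `|n|` (`n ∈ ℤ`) is repeated `2aₙ + kₙ + k'ₙ` times. -/
def reps (a k k' : ℤ →₀ ℕ) : Multiset ℕ :=
  (a.support ∪ k.support ∪ k'.support).val.bind
    (fun n => Multiset.replicate (2 * a n + k n + k' n) n.natAbs)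

/-- The decreasing rearrangement `(n₁*, n₂*, …)` of a finite multiset of naturals. -/
def descList (M : Multiset ℕ) : List ℕ := (M.sort (· ≤ ·)).reverse

/-- The momentum `m(k,k') = ∑ₙ (kₙ - k'ₙ)·n` of finitely supported `k, k' : ℤ → ℕ`. -/
def momentum (k k' : ℤ →₀ ℕ) : ℤ :=
  ∑ n ∈ k.support ∪ k'.support, ((k n : ℤ) - (k' n : ℤ)) * n

lemma lnZ_eq (c σ : ℝ) (n : ℤ) : lnZ c σ n = lnN c σ n.natAbs := by
  unfold lnZ lnN
  rw [Nat.cast_natAbs, Int.cast_abs]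

lemma lnN_nonneg {c σ : ℝ} (hc : Real.exp 1 ≤ c) (m : ℕ) : 0 ≤ lnN c σ m := by
  unfold lnN
  apply Real.rpow_nonneg
  apply Real.log_nonneg
  have : (1:ℝ) ≤ Real.exp 1 := Real.one_le_exp (by norm_num)
  exact le_max_of_le_left (by linarith)

lemma log_rpow_mono {σ x y : ℝ} (hσ : 2 < σ) (hx : 1 ≤ x) (hxy : x ≤ y) :
    Real.log x ^ σ ≤ Real.log y ^ σ :=
  Real.rpow_le_rpow (Real.log_nonneg hx) (Real.log_le_log (by linarith) hxy) (by linarith)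

lemma lnN_mono {c σ : ℝ} (hσ : 2 < σ) (hc : Real.exp 1 ≤ c) {m n : ℕ} (h : m ≤ n) :
    lnN c σ m ≤ lnN c σ n := by
  have h1 : (1:ℝ) ≤ Real.exp 1 := Real.one_le_exp (by norm_num)
  unfold lnN
  apply log_rpow_mono hσ (le_max_of_le_left (by linarith))
  have : (m:ℝ) ≤ n := by exact_mod_cast h
  exact max_le_max le_rfl this

lemma lnN_add {c σ : ℝ} (hσ : 2 < σ) (hc : Real.exp 1 ≤ c)
    (hsub : ∀ x y : ℝ, c ≤ y → y ≤ x →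
      Real.log (x + y) ^ σ ≤ Real.log x ^ σ + (1 / 2) * Real.log y ^ σ)
    {x y : ℕ} (h : y ≤ x) : lnN c σ (x + y) ≤ lnN c σ x + (1 / 2) * lnN c σ y := by
  have h1 : (1:ℝ) ≤ Real.exp 1 := Real.one_le_exp (by norm_num)
  have h' : (y:ℝ) ≤ x := by exact_mod_cast h
  have hx0 : (0:ℝ) ≤ x := by positivity
  have := hsub (max c x) (max c y) (le_max_left _ _) (max_le_max le_rfl h')
  refine le_trans ?_ this
  unfold lnN
  apply log_rpow_mono hσ (le_max_of_le_left (by linarith))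
  have e1 := le_max_left c (x:ℝ)
  have e2 := le_max_left c (y:ℝ)
  have e3 := le_max_right c (x:ℝ)
  have e4 := le_max_right c (y:ℝ)
  push_cast
  apply max_le <;> linarith

lemma lnN_add_sum {c σ : ℝ} (hσ : 2 < σ) (hc : Real.exp 1 ≤ c)
    (hsub : ∀ x y : ℝ, c ≤ y → y ≤ x →
      Real.log (x + y) ^ σ ≤ Real.log x ^ σ + (1 / 2) * Real.log y ^ σ)
    (S : Multiset ℕ) (x : ℕ) (h : ∀ y ∈ S, y ≤ x) :
    lnN c σ (x + S.sum) ≤ lnN c σ x + (1 / 2) * (S.map (lnN c σ)).sum := by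
  induction S using Multiset.induction_on with
  | empty => simp
  | cons y S ih =>
    have h1 := ih (fun z hz => h z (Multiset.mem_cons_of_mem hz))
    have h2 : y ≤ x + S.sum := le_trans (h y (Multiset.mem_cons_self _ _)) (Nat.le_add_right _ _)
    have h3 := lnN_add hσ hc hsub h2
    rw [Multiset.sum_cons, Multiset.map_cons, Multiset.sum_cons,
      show x + (y + S.sum) = x + S.sum + y by ring]
    linarith

lemma exists_max_mem (M : Multiset ℕ) (h : M ≠ 0) : ∃ x ∈ M, ∀ y ∈ M, y ≤ x := by
  obtain ⟨x, hx, h2⟩ := Finset.exists_max_image M.toFinset id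
    (by obtain ⟨z, hz⟩ := Multiset.exists_mem_of_ne_zero h; exact ⟨z, by simpa using hz⟩)
  exact ⟨x, by simpa using hx, fun y hy => h2 y (by simpa using hy)⟩

lemma key_multiset {c σ : ℝ} (hσ : 2 < σ) (hc : Real.exp 1 ≤ c)
    (hsub : ∀ x y : ℝ, c ≤ y → y ≤ x →
      Real.log (x + y) ^ σ ≤ Real.log x ^ σ + (1 / 2) * Real.log y ^ σ)
    (M : Multiset ℕ) (p m : ℕ) (hp : p ∈ M)
    (hm : 2 * p ≤ m + M.sum) :
    ∃ (q : ℕ) (T : Multiset ℕ), M ≤ p ::ₘ q ::ₘ T ∧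
      (1 / 2) * (T.map (lnN c σ)).sum
        ≤ (M.map (lnN c σ)).sum - 2 * lnN c σ p + lnN c σ m := by
  obtain ⟨M', rfl⟩ := Multiset.exists_cons_of_mem hp
  rw [Multiset.sum_cons] at hm
  by_cases h0 : M' = 0
  · subst h0
    refine ⟨p, 0, ?_, ?_⟩
    · exact Multiset.cons_le_cons _ (Multiset.zero_le _)
    · have : p ≤ m := by simp at hm; omega
      have := lnN_mono (c := c) hσ hc this
      simp
      linarith
  · obtain ⟨q, hq, hmax⟩ := exists_max_mem M' h0
    obtain ⟨T, rfl⟩ := Multiset.exists_cons_of_mem hq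
    refine ⟨q, T, le_rfl, ?_⟩
    rw [Multiset.sum_cons] at hm
    simp only [Multiset.map_cons, Multiset.sum_cons]
    have hq0 := lnN_nonneg (σ := σ) hc q
    have hm0 := lnN_nonneg (σ := σ) hc m
    have hT0 : 0 ≤ (T.map (lnN c σ)).sum := by
      apply Multiset.sum_nonneg
      intro x hx
      obtain ⟨y, _, rfl⟩ := Multiset.mem_map.1 hx
      exact lnN_nonneg hc y
    rcases le_total m q with hmq | hmq
    · have h1 := lnN_add_sum hσ hc hsub (m ::ₘ T) q (by
        intro y hy
        rcases Multiset.mem_cons.1 hy with rfl | hy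
        · exact hmq
        · exact hmax y (Multiset.mem_cons_of_mem hy))
      have h2 : p ≤ q + (m ::ₘ T).sum := by rw [Multiset.sum_cons]; omega
      have h3 := lnN_mono (c := c) hσ hc h2
      simp only [Multiset.map_cons, Multiset.sum_cons] at h1 h3
      linarith
    · have h1 := lnN_add_sum hσ hc hsub (q ::ₘ T) m (fun y hy => (hmax y hy).trans hmq)
      have h2 : p ≤ m + (q ::ₘ T).sum := by rw [Multiset.sum_cons]; omega
      have h3 := lnN_mono (c := c) hσ hc h2
      simp only [Multiset.map_cons, Multiset.sum_cons] at h1 h3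
      linarith

lemma reps_eq (a k k' : ℤ →₀ ℕ) : reps a k k' =
    ∑ n ∈ a.support ∪ k.support ∪ k'.support,
      Multiset.replicate (2 * a n + k n + k' n) n.natAbs := rfl

lemma reps_map_sum (c σ : ℝ) (a k k' : ℤ →₀ ℕ) :
    ((reps a k k').map (lnN c σ)).sum =
      ∑ n ∈ a.support ∪ k.support ∪ k'.support,
            ((2 * a n + k n + k' n : ℕ) : ℝ) * lnZ c σ n := by
  unfold reps
  rw [Multiset.map_bind, Multiset.sum_bind]
  simp only [Multiset.map_replicate, Multiset.sum_replicate, nsmul_eq_mul, lnZ_eq]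
  rfl

lemma reps_sum (a k k' : ℤ →₀ ℕ) :
    (reps a k k').sum =
      ∑ n ∈ a.support ∪ k.support ∪ k'.support, (2 * a n + k n + k' n) * n.natAbs := by
  unfold reps
  rw [Multiset.sum_bind]
  simp only [Multiset.sum_replicate, smul_eq_mul]
  rfl

lemma mem_reps (a k k' : ℤ →₀ ℕ) (p : ℕ) :
    p ∈ reps a k k' ↔ ∃ n : ℤ, 0 < 2 * a n + k n + k' n ∧ n.natAbs = p := by
  unfold reps
  simp only [Multiset.mem_bind, Multiset.mem_replicate]
  constructor
  · rintro ⟨n, _, h2, rfl⟩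
    exact ⟨n, by omega, rfl⟩
  · rintro ⟨n, h, rfl⟩
    refine ⟨n, ?_, by omega, rfl⟩
    simp only [Finset.mem_val, Finset.mem_union, Finsupp.mem_support_iff]
    omega

lemma momentum_bound (a k k' : ℤ →₀ ℕ) (p : ℕ) (hp : p ∈ reps a k k') :
    2 * p ≤ (momentum k k').natAbs + (reps a k k').sum := by
  obtain ⟨n, hn, rfl⟩ := (mem_reps a k k' p).1 hp
  rw [reps_sum]
  set U := a.support ∪ k.support ∪ k'.support with hU
  have hnU : n ∈ U := by
    simp only [hU, Finset.mem_union, Finsupp.mem_support_iff]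
    omega
  have hmom : momentum k k' = ∑ i ∈ U, ((k i : ℤ) - (k' i : ℤ)) * i := by
    unfold momentum
    apply Finset.sum_subset
    · intro x hx
      simp only [hU, Finset.mem_union] at hx ⊢
      tauto
    · intro x _ hx
      simp only [Finset.mem_union, Finsupp.mem_support_iff, not_or, not_not] at hx
      simp [hx.1, hx.2]
  have hs1 : ∑ i ∈ U, ((k i : ℤ) - (k' i : ℤ)) * i
      = ((k n : ℤ) - (k' n : ℤ)) * n + ∑ i ∈ U.erase n, ((k i : ℤ) - (k' i : ℤ)) * i :=
    (Finset.add_sum_erase _ _ hnU).symm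
  have hs2 : ∑ i ∈ U, (2 * a i + k i + k' i) * i.natAbs
      = (2 * a n + k n + k' n) * n.natAbs
        + ∑ i ∈ U.erase n, (2 * a i + k i + k' i) * i.natAbs :=
    (Finset.add_sum_erase _ _ hnU).symm
  have hb : |∑ i ∈ U.erase n, ((k i : ℤ) - (k' i : ℤ)) * i|
      ≤ ((∑ i ∈ U.erase n, (2 * a i + k i + k' i) * i.natAbs : ℕ) : ℤ) := by
    refine (Finset.abs_sum_le_sum_abs _ _).trans ?_
    push_cast
    apply Finset.sum_le_sum
    intro i _
    rw [abs_mul]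
    apply mul_le_mul_of_nonneg_right _ (abs_nonneg _)
    rw [abs_le]
    constructor <;> omega
  rw [hs2]
  zify
  rw [hmom, hs1]
  push_cast at hb
  set S := ∑ i ∈ U.erase n, ((k i : ℤ) - (k' i : ℤ)) * i
  set R := ∑ i ∈ U.erase n, (2 * (a i : ℤ) + k i + k' i) * |i|
  have hR : 0 ≤ R := (abs_nonneg _).trans hb
  have hn0 := abs_nonneg n
  have ht : |((k n : ℤ) - (k' n : ℤ)) * n| ≤ |((k n : ℤ) - (k' n : ℤ)) * n + S| + |S| := by
    have := abs_sub (((k n : ℤ) - (k' n : ℤ)) * n + S) S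
    simpa using this
  rw [abs_mul] at ht
  have hk1 : ((k n : ℤ) - (k' n : ℤ)) * |n| ≤ |(k n : ℤ) - (k' n : ℤ)| * |n| :=
    mul_le_mul_of_nonneg_right (le_abs_self _) hn0
  have hk2 : ((k' n : ℤ) - (k n : ℤ)) * |n| ≤ |(k n : ℤ) - (k' n : ℤ)| * |n| := by
    rw [abs_sub_comm]
    exact mul_le_mul_of_nonneg_right (le_abs_self _) hn0
  have hA0 : (0:ℤ) ≤ a n * |n| := by positivity
  have hK0 : (0:ℤ) ≤ k n * |n| := by positivity
  have hK0' : (0:ℤ) ≤ k' n * |n| := by positivity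
  have hpos := abs_nonneg (((k n : ℤ) - (k' n : ℤ)) * n + S)
  have hor : 1 ≤ a n ∨ 1 ≤ k n ∨ 1 ≤ k' n := by omega
  rcases hor with h | h | h
  · have : (1:ℤ) * |n| ≤ a n * |n| := mul_le_mul_of_nonneg_right (by exact_mod_cast h) hn0
    linarith
  · have : (1:ℤ) * |n| ≤ k n * |n| := mul_le_mul_of_nonneg_right (by exact_mod_cast h) hn0
    linarith
  · have : (1:ℤ) * |n| ≤ k' n * |n| := mul_le_mul_of_nonneg_right (by exact_mod_cast h) hn0
    linarith

lemma descList_head_mem (M : Multiset ℕ) (h : M ≠ 0) : (descList M).headI ∈ M := by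
  have h1 : ∀ x, x ∈ descList M ↔ x ∈ M := by
    intro x; simp [descList]
  cases hd : descList M with
  | nil =>
    obtain ⟨z, hz⟩ := Multiset.exists_mem_of_ne_zero h
    have := (h1 z).2 hz
    simp [hd] at this
  | cons x l =>
    exact (h1 x).1 (by simp [hd])

/-- sum over the `a`-part -/
lemma reps_a_le (a k k' : ℤ →₀ ℕ) : reps a 0 0 ≤ reps a k k' := by
  rw [reps_eq, reps_eq]
  refine le_trans (b := ∑ n ∈ a.support, Multiset.replicate (2 * a n + k n + k' n) n.natAbs) ?_ ?_
  · simp only [Finsupp.support_zero, Finset.union_empty]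
    apply Finset.sum_le_sum
    intro i _
    exact (Multiset.replicate_le_replicate _).2 (by simp; omega)
  · apply Finset.sum_le_sum_of_subset
    intro x hx
    simp only [Finset.mem_union]
    tauto

lemma sum_sub_two (f : ℕ → ℝ) (hf : ∀ n, 0 ≤ f n) (A T : Multiset ℕ) (p q : ℕ)
    (h : A ≤ p ::ₘ q ::ₘ T) (B : ℝ) (hB0 : 0 ≤ B) (hB : ∀ x ∈ A, f x ≤ B) :
    (A.map f).sum - 2 * B ≤ (T.map f).sum := by
  set s : Multiset ℕ := p ::ₘ q ::ₘ 0 with hs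
  have h1 : A - s ≤ T := by
    rw [tsub_le_iff_right]
    have : T + s = p ::ₘ q ::ₘ T := by
      rw [hs, add_comm]; simp
    rw [this]; exact h
  obtain ⟨T', rfl⟩ := Multiset.le_iff_exists_add.1 h1
  have hT' : 0 ≤ (T'.map f).sum := by
    apply Multiset.sum_nonneg
    intro x hx
    obtain ⟨y, _, rfl⟩ := Multiset.mem_map.1 hx
    exact hf y
  have h2 : (A.map f).sum = ((A - s).map f).sum + ((A ∩ s).map f).sum := by
    rw [← Multiset.sum_add, ← Multiset.map_add, Multiset.sub_add_inter]
  have h3 : ((A ∩ s).map f).sum ≤ (Multiset.card ((A ∩ s).map f)) • B := by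
    apply Multiset.sum_le_card_nsmul
    intro x hx
    obtain ⟨y, hy, rfl⟩ := Multiset.mem_map.1 hx
    exact hB y (Multiset.mem_inter.1 hy).1
  have h4 : Multiset.card ((A ∩ s).map f) ≤ 2 := by
    rw [Multiset.card_map]
    exact (Multiset.card_le_card Multiset.inter_le_right).trans (by simp [hs])
  have h5 : ((Multiset.card ((A ∩ s).map f)) • B) ≤ 2 * B := by
    rw [nsmul_eq_mul]
    exact mul_le_mul_of_nonneg_right (by exact_mod_cast h4) hB0
  rw [Multiset.map_add, Multiset.sum_add]
  linarith

lemma sigma_le_log {c σ : ℝ} (hσ : 2 < σ) (hc : Real.exp 1 ≤ c)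
    (hsub : ∀ x y : ℝ, c ≤ y → y ≤ x →
      Real.log (x + y) ^ σ ≤ Real.log x ^ σ + (1 / 2) * Real.log y ^ σ) :
    σ ≤ Real.log c := by
  have hc0 : 0 < c := (Real.exp_pos 1).trans_le hc
  have hl : 1 ≤ Real.log c := by rwa [Real.le_log_iff_exp_le hc0]
  have h := hsub c c le_rfl le_rfl
  have e1 : Real.log (c + c) = Real.log c * (1 + Real.log 2 / Real.log c) := by
    rw [← two_mul, Real.log_mul (by norm_num) hc0.ne']
    field_simp
    ring
  have hl2 := Real.log_two_gt_d9
  have hq : 0 ≤ Real.log 2 / Real.log c := by positivity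
  rw [e1, Real.mul_rpow (by linarith) (by linarith)] at h
  have hb : 1 + σ * (Real.log 2 / Real.log c) ≤ (1 + Real.log 2 / Real.log c) ^ σ :=
    one_add_mul_self_le_rpow_one_add (by linarith) (by linarith)
  have hp : 0 < Real.log c ^ σ := Real.rpow_pos_of_pos (by linarith) _
  have h2 : (1 + Real.log 2 / Real.log c) ^ σ ≤ 3 / 2 := by
    by_contra hcon
    push Not at hcon
    nlinarith
  have h3 : σ * (Real.log 2 / Real.log c) ≤ 1 / 2 := by linarith
  rw [← mul_div_assoc, div_le_iff₀ (by linarith)] at h3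
  nlinarith

lemma term_bound {c σ δ v : ℝ} (hσ : 2 < σ) (hδ : δ ∈ Set.Ioo (0 : ℝ) 1)
    (hc : Real.exp 1 ≤ c) (hlc : σ ≤ Real.log c) (hv : v = (4 / δ) ^ (1 / σ))
    (n : ℤ) (b : ℝ) (hb : 0 ≤ b) :
    Real.log (1 + b) - δ * b * lnZ c σ n ≤ if |(n : ℝ)| ≤ Real.exp v then v else 0 := by
  obtain ⟨hδ0, hδ1⟩ := hδ
  have hc0 : 0 < c := (Real.exp_pos 1).trans_le hc
  have hB : 0 < 4 / δ := by positivity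
  have hv0 : 0 < v := by rw [hv]; positivity
  have hvσ : v ^ σ = 4 / δ := by
    rw [hv, ← Real.rpow_mul hB.le, one_div_mul_cancel (by linarith), Real.rpow_one]
  have hlog : Real.log (1 + b) ≤ b := by
    have := Real.log_le_sub_one_of_pos (show 0 < 1 + b by linarith)
    linarith
  have hbig : ∀ L : ℝ, 1 ≤ δ * L → Real.log (1 + b) - δ * b * L ≤ 0 := by
    intro L hL
    nlinarith
  split_ifs with h
  · have hL : Real.log c ^ σ ≤ lnZ c σ n := by
      unfold lnZ
      refine log_rpow_mono hσ ?_ (le_max_left _ _)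
      have := Real.one_le_exp (show (0:ℝ) ≤ 1 by norm_num)
      linarith
    have hlc0 : 0 < Real.log c := by linarith
    set Lc := Real.log c ^ σ with hLc
    have hLc0 : 0 < Lc := Real.rpow_pos_of_pos hlc0 _
    have hmono : Real.log (1 + b) - δ * b * lnZ c σ n ≤ Real.log (1 + b) - δ * b * Lc := by
      have : δ * b * Lc ≤ δ * b * lnZ c σ n := mul_le_mul_of_nonneg_left hL (by positivity)
      linarith
    refine hmono.trans ?_
    by_cases hθ : 1 ≤ δ * Lc
    · exact (hbig _ hθ).trans hv0.le
    · push Not at hθ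
      have hθ0 : 0 < δ * Lc := by positivity
      have h1 := Real.log_le_sub_one_of_pos (show 0 < (δ * Lc) * (1 + b) by positivity)
      rw [Real.log_mul hθ0.ne' (by linarith), Real.log_mul hδ0.ne' hLc0.ne', hLc,
        Real.log_rpow hlc0, ← hLc] at h1
      have h2 : Real.log (4 / δ) = σ * Real.log v := by
        rw [← hvσ, Real.log_rpow hv0]
      rw [Real.log_div (by norm_num) hδ0.ne'] at h2
      have h4 : 0 ≤ Real.log 4 := Real.log_nonneg (by norm_num)
      have h5 := Real.log_le_sub_one_of_pos (show 0 < v / Real.log c by positivity)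
      rw [Real.log_div hv0.ne' hlc0.ne'] at h5
      have h6 : σ * (Real.log v - Real.log (Real.log c)) ≤ σ * (v / Real.log c) :=
        mul_le_mul_of_nonneg_left (by linarith) (by linarith)
      have h7 : σ * (v / Real.log c) ≤ v := by
        rw [← mul_div_assoc, div_le_iff₀ hlc0]
        nlinarith
      nlinarith
  · push Not at h
    apply hbig
    have hL : v ^ σ ≤ lnZ c σ n := by
      unfold lnZ
      apply Real.rpow_le_rpow hv0.le _ (by linarith)
      rw [Real.le_log_iff_exp_le (lt_max_of_lt_left hc0)]
      exact le_max_of_le_right h.le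
    rw [hvσ] at hL
    have : δ * (4 / δ) ≤ δ * lnZ c σ n := mul_le_mul_of_nonneg_left hL hδ0.le
    rw [mul_div_cancel₀ _ hδ0.ne'] at this
    linarith

lemma count_bound (U : Finset ℤ) {v : ℝ} (hv : 0 < v) :
    ∑ n ∈ U, (if |(n : ℝ)| ≤ Real.exp v then v else 0) ≤ (2 * Real.exp v + 1) * v := by
  rw [← Finset.sum_filter, Finset.sum_const, nsmul_eq_mul]
  apply mul_le_mul_of_nonneg_right _ hv.le
  set K := ⌊Real.exp v⌋₊ with hK
  have hsub : U.filter (fun n : ℤ => |(n : ℝ)| ≤ Real.exp v) ⊆ Finset.Icc (-(K:ℤ)) K := by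
    intro n hn
    have h := (Finset.mem_filter.1 hn).2
    have h2 : ((n.natAbs : ℕ) : ℝ) ≤ Real.exp v := by
      rw [Nat.cast_natAbs, Int.cast_abs]; exact h
    have h3 : n.natAbs ≤ K := Nat.le_floor h2
    rw [Finset.mem_Icc]
    omega
  have h1 := Finset.card_le_card hsub
  rw [Int.card_Icc] at h1
  have h2 : (U.filter (fun n : ℤ => |(n : ℝ)| ≤ Real.exp v)).card ≤ 2 * K + 1 := by omega
  have h3 : ((U.filter (fun n : ℤ => |(n : ℝ)| ≤ Real.exp v)).card : ℝ) ≤ 2 * K + 1 := by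
    exact_mod_cast h2
  have h4 : (K:ℝ) ≤ Real.exp v := Nat.floor_le (Real.exp_pos v).le
  linarith

/-- inequality (59), proved in Lemma 3.1 of the paper.
`∏ₙ(1 + aₙ) · exp(−δ·( ∑ₙ(2aₙ + kₙ + k'ₙ)·ln^σ⌊n⌋ − 2·ln^σ⌊n₁*⌋ + ln^σ⌊m*(k,k')⌋ ))
  ≤ exp( 3·(4/δ)^{1/(σ−1)}·exp((4/δ)^{1/σ}) )`.
(All factors with `aₙ = 0` equal `1`, so the product is taken over the support of `a`.) -/
theorem full_dim_KAM_stmt11 (σ δ : ℝ) (hσ : 2 < σ) (hδ : δ ∈ Set.Ioo (0 : ℝ) 1)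
    (c : ℝ) (hc : Real.exp 1 ≤ c)
    (hsub : ∀ x y : ℝ, c ≤ y → y ≤ x →
      Real.log (x + y) ^ σ ≤ Real.log x ^ σ + (1 / 2) * Real.log y ^ σ)
    (a k k' : ℤ →₀ ℕ) (hne : ¬(a = 0 ∧ k = 0 ∧ k' = 0)) :
    (∏ n ∈ a.support, (1 + (a n : ℝ))) *
      Real.exp (-δ *
        ((∑ n ∈ a.support ∪ k.support ∪ k'.support,
            ((2 * a n + k n + k' n : ℕ) : ℝ) * lnZ c σ n)
          - 2 * lnN c σ (descList (reps a k k')).headI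
          + lnN c σ (momentum k k').natAbs))
      ≤ Real.exp (3 * (4 / δ) ^ (1 / (σ - 1)) * Real.exp ((4 / δ) ^ (1 / σ))) := by
  have hδ0 := hδ.1
  have hM : reps a k k' ≠ 0 := by
    intro h0
    apply hne
    have h1 : ∀ n : ℤ, 2 * a n + k n + k' n = 0 := by
      intro n
      by_contra hcon
      have := (mem_reps a k k' n.natAbs).2 ⟨n, by omega, rfl⟩
      simp [h0] at this
    refine ⟨?_, ?_, ?_⟩ <;> ext n <;> have := h1 n <;> simp <;> omega
  have hp := descList_head_mem _ hM
  obtain ⟨q, T, hMT, hE⟩ := key_multiset hσ hc hsub _ _ (momentum k k').natAbs hp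
    (momentum_bound a k k' _ hp)
  rw [reps_map_sum] at hE
  set E := (∑ n ∈ a.support ∪ k.support ∪ k'.support,
            ((2 * a n + k n + k' n : ℕ) : ℝ) * lnZ c σ n)
          - 2 * lnN c σ (descList (reps a k k')).headI
          + lnN c σ (momentum k k').natAbs with hEdef
  obtain ⟨v, hv⟩ : ∃ v, v = (4 / δ) ^ (1 / σ) := ⟨_, rfl⟩
  have h4 : 1 ≤ 4 / δ := by
    rw [le_div_iff₀ hδ0]
    linarith [hδ.2]
  have hv1 : 1 ≤ v := by
    rw [hv]
    exact Real.one_le_rpow h4 (by positivity)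
  have hvB : v ≤ (4 / δ) ^ (1 / (σ - 1)) := by
    rw [hv]
    apply Real.rpow_le_rpow_of_exponent_le h4
    apply one_div_le_one_div_of_le <;> linarith
  rw [← hv]
  have hRHS : 3 * v * Real.exp v ≤ 3 * (4 / δ) ^ (1 / (σ - 1)) * Real.exp v := by
    gcongr
  refine le_trans ?_ (Real.exp_le_exp.2 hRHS)
  by_cases ha : a = 0
  · have hT0 : 0 ≤ (T.map (lnN c σ)).sum := by
      apply Multiset.sum_nonneg
      intro x hx
      obtain ⟨y, _, rfl⟩ := Multiset.mem_map.1 hx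
      exact lnN_nonneg hc y
    rw [show ∏ n ∈ a.support, (1 + (a n : ℝ)) = 1 by simp [ha], one_mul, Real.exp_le_exp]
    have : 0 ≤ 3 * v * Real.exp v := by positivity
    nlinarith
  · obtain ⟨N, hN, hNmax⟩ := Finset.exists_max_image a.support (fun n => n.natAbs)
      (Finsupp.support_nonempty_iff.2 ha)
    have hA := sum_sub_two (lnN c σ) (lnN_nonneg hc) (reps a 0 0) T _ q
      ((reps_a_le a k k').trans hMT) (lnN c σ N.natAbs) (lnN_nonneg hc _) (by
        intro x hx
        obtain ⟨n, hn, rfl⟩ := (mem_reps a 0 0 x).1 hx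
        apply lnN_mono hσ hc
        apply hNmax
        simp at hn ⊢
        omega)
    rw [reps_map_sum, ← lnZ_eq] at hA
    simp only [Finsupp.support_zero, Finset.union_empty, Finsupp.coe_zero, Pi.zero_apply,
      add_zero] at hA
    have hA2 : ∑ n ∈ a.support, ((2 * a n : ℕ) : ℝ) * lnZ c σ n
        = 2 * ∑ n ∈ a.support, (a n : ℝ) * lnZ c σ n := by
      rw [Finset.mul_sum]
      apply Finset.sum_congr rfl
      intro i _
      push_cast
      ring
    rw [hA2] at hA
    have hE2 : ∑ n ∈ a.support, (a n : ℝ) * lnZ c σ n - lnZ c σ N ≤ E := by linarith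
    have hprod : ∏ n ∈ a.support, (1 + (a n : ℝ))
        = Real.exp (∑ n ∈ a.support, Real.log (1 + (a n : ℝ))) := by
      rw [Real.exp_sum]
      apply Finset.prod_congr rfl
      intro i _
      rw [Real.exp_log (by positivity)]
    rw [hprod, ← Real.exp_add, Real.exp_le_exp]
    have hlc := sigma_le_log hσ hc hsub
    have hsum : ∑ n ∈ a.support, (Real.log (1 + (a n : ℝ)) - δ * (a n : ℝ) * lnZ c σ n)
        + δ * lnZ c σ N ≤ Real.log 2 +
        ∑ n ∈ a.support, (if |(n : ℝ)| ≤ Real.exp v then v else 0) := by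
      rw [← Finset.add_sum_erase _ _ hN,
        ← Finset.add_sum_erase _ (fun n : ℤ => if |(n : ℝ)| ≤ Real.exp v then v else 0) hN]
      have h1 : ∑ n ∈ a.support.erase N, (Real.log (1 + (a n : ℝ)) - δ * (a n : ℝ) * lnZ c σ n)
          ≤ ∑ n ∈ a.support.erase N, (if |(n : ℝ)| ≤ Real.exp v then v else 0) :=
        Finset.sum_le_sum (fun n _ => term_bound hσ hδ hc hlc hv n _ (by positivity))
      have haN : (1:ℝ) ≤ a N := by
        have : a N ≠ 0 := by simpa using hN
        exact_mod_cast Nat.one_le_iff_ne_zero.2 this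
      have h2 := term_bound hσ hδ hc hlc hv N ((a N : ℝ) - 1) (by linarith)
      have h3 : Real.log (1 + (a N : ℝ)) ≤ Real.log 2 + Real.log (1 + ((a N : ℝ) - 1)) := by
        rw [← Real.log_mul (by norm_num) (by linarith)]
        apply Real.log_le_log <;> linarith
      linarith
    have hcount := count_bound a.support (show 0 < v by linarith)
    have hexp := Real.add_one_le_exp v
    have hl2 := Real.log_two_lt_d9
    rw [Finset.sum_sub_distrib] at hsum
    have hs : ∑ n ∈ a.support, δ * (a n : ℝ) * lnZ c σ n
        = δ * ∑ n ∈ a.support, (a n : ℝ) * lnZ c σ n := by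
      rw [Finset.mul_sum]
      apply Finset.sum_congr rfl
      intro i _
      ring
    rw [hs] at hsum
    have hE3 := mul_le_mul_of_nonneg_left hE2 hδ0.le
    have hfin : v + 1 ≤ v * Real.exp v := by nlinarith
    linarith
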